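/- Let ω be a symmetric (p,p)-double form satisfying the first Bianchi identity on an n-dimensional real inner product space (V,g), and let q ≥ 1 be an integer with n ≥ 2pq. Then the Avez-type expansion c^{2pq}(ω^{2q})/(2pq)! = Σ_{r=0}^{pq} ((−1)^{r+pq}/(r!)²)·⟨c^r(ω^q), c^r(ω^q)⟩ holds. -/

import Mathlib

noncomputable section

open Finset

/-- Double forms over an `n`-dimensional real inner product space, described by their
coefficients in a fixed orthonormal basis: a `(p,q)`-double form corresponds to a function
supported on pairs of subsets of cardinalities `p` and `q`. -/
abbrev DForm (n : ℕ) := Finset (Fin n) → Finset (Fin n) → ℝ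

namespace DForm

variable {n : ℕ}

/-- Sign of the shuffle placing the elements of `A` (in increasing order) before
those of `B` (in increasing order). -/
def shuffleSign (A B : Finset (Fin n)) : ℝ :=
  (-1 : ℝ) ^ (∑ x ∈ B, (A.filter fun a => x < a).card)

/-- The exterior product of double forms. -/
def wedge (ω₁ ω₂ : DForm n) : DForm n := fun I J =>
  ∑ A ∈ I.powerset, ∑ B ∈ J.powerset,
    shuffleSign A (I \ A) * shuffleSign B (J \ B) * ω₁ A B * ω₂ (I \ A) (J \ B)

/-- Exterior powers `ω^k` of a double form. -/
def dpow (ω : DForm n) : ℕ → DForm n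
  | 0 => fun I J => if I = ∅ ∧ J = ∅ then 1 else 0
  | k + 1 => wedge ω (dpow ω k)

/-- The double Hodge star operator. -/
def hstar (ω : DForm n) : DForm n := fun I J =>
  shuffleSign Iᶜ I * shuffleSign Jᶜ J * ω Iᶜ Jᶜ

/-- The contraction `c` of double forms. -/
def contr (ω : DForm n) : DForm n := fun I J =>
  ∑ j : Fin n,
    if j ∈ I ∨ j ∈ J then 0
    else shuffleSign {j} I * shuffleSign {j} J * ω (insert j I) (insert j J)

/-- Iterated contraction `c^k`. -/
def citer (ω : DForm n) : ℕ → DForm n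
  | 0 => ω
  | k + 1 => contr (citer ω k)

/-- The inner product of double forms. -/
def dinner (ω₁ ω₂ : DForm n) : ℝ :=
  ∑ I : Finset (Fin n), ∑ J : Finset (Fin n), ω₁ I J * ω₂ I J

/-- The transpose `ω^t` of a double form. -/
def transp (ω : DForm n) : DForm n := fun I J => ω J I

/-- The composition (Greub) product `ω₁ ∘ ω₂` of double forms. -/
def comp (ω₁ ω₂ : DForm n) : DForm n := fun I J =>
  ∑ K : Finset (Fin n), ω₂ I K * ω₁ K J

/-- The scalar value of a `(0,0)`-double form. -/
def toScalar (ω : DForm n) : ℝ := ω ∅ ∅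

/-- The metric, as a `(1,1)`-double form. -/
def gMetric (n : ℕ) : DForm n := fun I J => if I = J ∧ I.card = 1 then 1 else 0

/-- Iterated composition power `ω^{∘r}` of a `(1,1)`-double form, with `ω^{∘0} = g`. -/
def cpow (ω : DForm n) : ℕ → DForm n
  | 0 => gMetric n
  | r + 1 => comp ω (cpow ω r)

/-- The `(1,1)`-double form associated to a bilinear form, given by its matrix in the
orthonormal basis. -/
def ofMatrix (h : Matrix (Fin n) (Fin n) ℝ) : DForm n := fun I J =>
  ∑ i : Fin n, ∑ j : Fin n, if I = {i} ∧ J = {j} then h i j else 0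

/-- `ω` is a `(p,q)`-double form. -/
def IsOfDeg (ω : DForm n) (p q : ℕ) : Prop :=
  ∀ I J : Finset (Fin n), ω I J ≠ 0 → I.card = p ∧ J.card = q

/-- `ω` is a symmetric double form. -/
def IsSym (ω : DForm n) : Prop := ∀ I J, ω I J = ω J I

/-- The sign relating `e_{v 0} ∧ ⋯ ∧ e_{v (p-1)}` to the corresponding increasing
basis `p`-vector (and `0` if the indices are not pairwise distinct). -/
def tupleSign {p : ℕ} (v : Fin p → Fin n) : ℝ :=
  if Function.Injective v then (((Equiv.Perm.sign (Tuple.sort v)) : ℤ) : ℝ) else 0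

/-- Evaluation of a double form on wedges of basis vectors indexed by arbitrary tuples. -/
def evalT (ω : DForm n) {p q : ℕ} (v : Fin p → Fin n) (w : Fin q → Fin n) : ℝ :=
  tupleSign v * tupleSign w * ω (Finset.image v Finset.univ) (Finset.image w Finset.univ)

/-- The first Bianchi identity for a `(2,2)`-double form:
`R(x∧y,z∧t) + R(y∧z,x∧t) + R(z∧x,y∧t) = 0`. -/
def Bianchi2 (R : DForm n) : Prop :=
  ∀ x y z t : Fin n,
    evalT R ![x, y] ![z, t] + evalT R ![y, z] ![x, t] + evalT R ![z, x] ![y, t] = 0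

/-- The first Bianchi identity for a `(p,p)`-double form. -/
def FirstBianchi (ω : DForm n) (p : ℕ) : Prop :=
  ∀ (x : Fin (p + 1) → Fin n) (y : Fin (p - 1) → Fin n),
    ∑ j : Fin (p + 1),
      (-1 : ℝ) ^ (j : ℕ) * evalT ω (x ∘ Fin.succAbove j) (Fin.cons (x j) y) = 0

/-- The characteristic coefficient `s_k(h)` of a bilinear form `h`, defined through the
characteristic polynomial: `det(h - λ g) = ∑ (-1)^(n-i) s_i(h) λ^(n-i)`. -/
def sInv (h : Matrix (Fin n) (Fin n) ℝ) (k : ℕ) : ℝ :=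
  (-1 : ℝ) ^ k * (Matrix.charpoly h).coeff (n - k)

/-- The `k`-th cofactor (Newton) transformation `t_k(h) = (1/(k!(n-1-k)!)) *(g^{n-1-k} h^k)`. -/
def tInv (h : Matrix (Fin n) (Fin n) ℝ) (k : ℕ) : DForm n :=
  ((k.factorial * (n - 1 - k).factorial : ℕ) : ℝ)⁻¹ •
    hstar (wedge (dpow (gMetric n) (n - 1 - k)) (dpow (ofMatrix h) k))

/-- The `(r,q)`-cofactor `s_{(r,q)}(h) = (1/(q!(n-q-r)!)) *(g^{n-q-r} h^q)`. -/
def sCof (h : Matrix (Fin n) (Fin n) ℝ) (r q : ℕ) : DForm n :=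
  ((q.factorial * (n - q - r).factorial : ℕ) : ℝ)⁻¹ •
    hstar (wedge (dpow (gMetric n) (n - q - r)) (dpow (ofMatrix h) q))

end DForm

/-!
By induction, `c^k ω / k!` at `(I, J)` is the signed sum of `ω (K ∪ I) (K ∪ J)` over the `k`-sets
`K` disjoint from `I ∪ J`, and the sign `ε(K, I ∆ J)` depends on `I` and `J` only through `I ∆ J`.
Hence `∑ r, (-1)^r / (r!)² ⟨c^r α, c^r β⟩` is a sum of terms
`± α (K ∪ I) (K ∪ J) * β (L ∪ I) (L ∪ J)` over quadruples `(I, J, K, L)`. Put `D = I \ J`,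
`E = J \ I`, `M = I ∩ J`, `A = M ∪ K` and `B = M ∪ L`. For fixed `(D, E, A, B)` the terms differ
only by the sign `(-1)^#M` as `M` runs over the subsets of `A ∩ B`, so they cancel unless `A` and
`B` are disjoint. What survives is a sum over pairwise disjoint `D, E, A, B`, and this is exactly
the expansion of the full trace of `α * βᵗ`, up to comparing shuffle signs.
-/

section FinsetSums

variable {ι M R : Type*} [AddCommMonoid M]

lemma sum_range_sum_powersetCard_sum_powersetCard (s : Finset ι) (k : ℕ)
    {f : Finset ι → Finset ι → M} (hf : ∀ t ⊆ s, ∀ u ⊆ s, f t u ≠ 0 → #t < k ∧ #u = #t) :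
    ∑ r ∈ range k, ∑ t ∈ powersetCard r s, ∑ u ∈ powersetCard r s, f t u =
      ∑ t ∈ s.powerset, ∑ u ∈ s.powerset, f t u := by
  simp_rw [powersetCard_eq_filter, sum_filter]
  rw [sum_comm]
  refine sum_congr rfl fun t ht ↦ ?_
  have card_of_ne_zero (u : Finset ι) (hu : u ∈ s.powerset) :=
    hf t (mem_powerset.mp ht) u (mem_powerset.mp hu)
  rw [sum_ite_eq]
  split_ifs with hk
  · exact sum_congr rfl fun u hu ↦ ite_eq_left_iff.mpr fun hne ↦
      (not_imp_comm.mp (card_of_ne_zero u hu) fun h ↦ hne h.2).symm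
  · exact (sum_eq_zero fun u hu ↦ not_imp_comm.mp (card_of_ne_zero u hu) fun h ↦
      hk (mem_range.mpr h.1)).symm

variable [DecidableEq ι]

lemma prod_symmDiff_of_mul_self_eq_one [CommMonoid R] (s t : Finset ι) {f : ι → R}
    (hf : ∀ i, f i * f i = 1) :
    ∏ i ∈ symmDiff s t, f i = (∏ i ∈ s, f i) * ∏ i ∈ t, f i := by
  have hinter : (∏ i ∈ s ∩ t, f i) * ∏ i ∈ s ∩ t, f i = 1 := by
    simp only [← prod_mul_distrib, hf, prod_const_one]
  calc
    _ = (∏ i ∈ s \ t, f i) * ∏ i ∈ t \ s, f i := prod_union disjoint_sdiff_sdiff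
    _ = ((∏ i ∈ s ∩ t, f i) * ∏ i ∈ s \ t, f i) * ((∏ i ∈ t ∩ s, f i) * ∏ i ∈ t \ s, f i) := by
      rw [inter_comm t s, mul_mul_mul_comm, hinter, one_mul]
    _ = _ := by rw [prod_inter_mul_prod_sdiff, prod_inter_mul_prod_sdiff]

lemma sum_sum_powersetCard_erase_insert (s : Finset ι) (k : ℕ) (f : Finset ι → M) :
    ∑ j ∈ s, ∑ t ∈ powersetCard k (s.erase j), f (insert j t) =
      (k + 1) • ∑ t ∈ powersetCard (k + 1) s, f t := by
  have insert_reindex (j : ι) (hj : j ∈ s) :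
      ∑ t ∈ powersetCard k (s.erase j), f (insert j t) =
        ∑ t ∈ powersetCard (k + 1) s with j ∈ t, f t := by
    refine sum_bij' (fun t _ ↦ insert j t) (fun t _ ↦ t.erase j) ?_ ?_ ?_ ?_ ?_ <;>
      simp only [mem_filter, mem_powersetCard] <;> grind
  rw [sum_congr rfl insert_reindex, sum_comm' (t' := powersetCard (k + 1) s) (s' := id), smul_sum]
  · refine sum_congr rfl fun t ht ↦ ?_
    rw [id, sum_const, (mem_powersetCard.mp ht).2]
  · simp only [mem_filter, mem_powersetCard, id]
    grind

lemma sum_powerset_sum_powerset_sdiff_union {s t : Finset ι} (h : t ⊆ s)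
    (f : Finset ι → Finset ι → M) :
    ∑ u ∈ t.powerset, ∑ v ∈ (s \ u).powerset, f u (u ∪ v) =
      ∑ w ∈ s.powerset, ∑ u ∈ (t ∩ w).powerset, f u w := by
  rw [sum_sigma', sum_sigma']
  refine sum_bij' (fun x _ ↦ ⟨x.1 ∪ x.2, x.1⟩) (fun x _ ↦ ⟨x.2, x.1 \ x.2⟩) ?_ ?_ ?_ ?_ ?_ <;>
    rintro ⟨u, v⟩ <;> simp only [mem_sigma, mem_powerset, Sigma.mk.injEq] <;> grind

lemma sum_powerset_sum_powerset_sdiff (s : Finset ι) (f : Finset ι → Finset ι → Finset ι → M) :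
    ∑ t ∈ s.powerset, ∑ u ∈ t.powerset, f u (t \ u) (s \ t) =
      ∑ u ∈ s.powerset, ∑ v ∈ (s \ u).powerset, f u v ((s \ u) \ v) := by
  rw [sum_sigma', sum_sigma']
  refine sum_bij' (fun x _ ↦ ⟨x.2, x.1 \ x.2⟩) (fun x _ ↦ ⟨x.1 ∪ x.2, x.1⟩)
    ?maps_to ?inv_maps_to ?left_inv ?right_inv ?summand_eq <;>
    rintro ⟨u, v⟩ <;> simp only [mem_sigma, mem_powerset, Sigma.mk.injEq]
  case summand_eq =>
    intro h
    congr 1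
    grind
  all_goals grind

lemma sum_powerset_neg_one_pow_card_sdiff_mul [CommRing R] {s u : Finset ι} (hu : u ⊆ s)
    (f : Finset ι → R) :
    ∑ m ∈ u.powerset, ∑ v ∈ (s \ m).powerset, (-1) ^ #(u \ m) * f (m ∪ v) =
      ∑ v ∈ (s \ u).powerset, (-1) ^ #u * f v := by
  have alternating_sum (t : Finset ι) :
      ∑ m ∈ t.powerset, (-1 : R) ^ #m = if t = ∅ then 1 else 0 := by
    exact_mod_cast congrArg (Int.cast : ℤ → R) (sum_powerset_neg_one_pow_card (x := t))
  calc
    _ = ∑ m ∈ u.powerset, ∑ v ∈ (s \ m).powerset, (-1) ^ #u * f (m ∪ v) * (-1) ^ #m := by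
      refine sum_congr rfl fun m hm ↦ sum_congr rfl fun v _ ↦ ?_
      have hsq : (-1 : R) ^ #m * (-1) ^ #m = 1 := by
        rw [← mul_pow, neg_one_mul, neg_neg, one_pow]
      rw [← card_sdiff_add_card_eq_card (mem_powerset.mp hm), pow_add]
      linear_combination -(-1) ^ #(u \ m) * f (m ∪ v) * hsq
    _ = ∑ v ∈ s.powerset, (-1) ^ #u * f v * ∑ m ∈ (u ∩ v).powerset, (-1) ^ #m := by
      simp_rw [mul_sum]
      exact sum_powerset_sum_powerset_sdiff_union hu fun m v ↦ (-1) ^ #u * f v * (-1) ^ #m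
    _ = ∑ v ∈ s.powerset with Disjoint u v, (-1) ^ #u * f v := by
      simp_rw [alternating_sum, ← disjoint_iff_inter_eq_empty, mul_ite, mul_one, mul_zero,
        sum_filter]
    _ = _ := by
      refine sum_congr ?_ fun _ _ ↦ rfl
      ext v
      simp only [mem_filter, mem_powerset, subset_sdiff, disjoint_comm]

lemma sum_powerset_neg_one_pow_card_mul [CommRing R] (s : Finset ι)
    (f : Finset ι → Finset ι → R) :
    ∑ m ∈ s.powerset, ∑ u ∈ (s \ m).powerset, ∑ v ∈ (s \ m).powerset,
        (-1) ^ #u * f (m ∪ u) (m ∪ v) =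
      ∑ u ∈ s.powerset, ∑ v ∈ (s \ u).powerset, (-1) ^ #u * f u v :=
  calc
    _ = ∑ m ∈ s.powerset, ∑ u ∈ (s \ m).powerset,
          ∑ v ∈ (s \ m).powerset, (-1) ^ #((m ∪ u) \ m) * f (m ∪ u) (m ∪ v) := by
      refine sum_congr rfl fun m _ ↦ sum_congr rfl fun u hu ↦ ?_
      rw [union_sdiff_cancel_left (subset_sdiff.mp (mem_powerset.mp hu)).2.symm]
    _ = ∑ u ∈ s.powerset, ∑ m ∈ (s ∩ u).powerset,
          ∑ v ∈ (s \ m).powerset, (-1) ^ #(u \ m) * f u (m ∪ v) :=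
      sum_powerset_sum_powerset_sdiff_union Subset.rfl
        fun m u ↦ ∑ v ∈ (s \ m).powerset, (-1) ^ #(u \ m) * f u (m ∪ v)
    _ = _ := by
      refine sum_congr rfl fun u hu ↦ ?_
      rw [mem_powerset] at hu
      rw [inter_eq_right.mpr hu, sum_powerset_neg_one_pow_card_sdiff_mul hu]

variable [Fintype ι]

lemma sum_sum_eq_sum_sdiff_inter (f : Finset ι → Finset ι → M) :
    ∑ s, ∑ t, f s t =
      ∑ d, ∑ e ∈ dᶜ.powerset, ∑ m ∈ (d ∪ e)ᶜ.powerset, f (d ∪ m) (e ∪ m) := by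
  simp only [sum_sigma']
  refine sum_bij' (fun x _ ↦ ⟨x.1 \ x.2, x.2 \ x.1, x.1 ∩ x.2⟩)
    (fun x _ ↦ ⟨x.1 ∪ x.2.2, x.2.1 ∪ x.2.2⟩)
    ?maps_to ?inv_maps_to ?left_inv ?right_inv ?summand_eq
  case summand_eq =>
    rintro ⟨s, t⟩ -
    congr 1 <;> grind [mem_compl]
  all_goals
    simp only [mem_sigma, mem_powerset, mem_univ, Sigma.forall, Sigma.mk.injEq, heq_eq_eq]
    grind [mem_compl]

-- `d = t \ u`, `e = u \ t`, `a = t ∩ u` and `b = s \ (t ∪ u)`.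
lemma sum_sum_powerset_sum_powerset_eq_sum_disjoint
    (f : Finset ι → Finset ι → Finset ι → Finset ι → M) :
    ∑ s, ∑ t ∈ s.powerset, ∑ u ∈ s.powerset, f t (s \ t) u (s \ u) =
      ∑ d, ∑ e ∈ dᶜ.powerset, ∑ a ∈ (d ∪ e)ᶜ.powerset, ∑ b ∈ ((d ∪ e)ᶜ \ a).powerset,
        f (d ∪ a) (e ∪ b) (e ∪ a) (d ∪ b) := by
  simp only [sum_sigma']
  refine sum_bij'
    (fun x _ ↦ ⟨x.2.1 \ x.2.2, x.2.2 \ x.2.1, x.2.1 ∩ x.2.2, x.1 \ (x.2.1 ∪ x.2.2)⟩)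
    (fun x _ ↦ ⟨x.1 ∪ x.2.1 ∪ x.2.2.1 ∪ x.2.2.2, x.1 ∪ x.2.2.1, x.2.1 ∪ x.2.2.1⟩)
    ?maps_to ?inv_maps_to ?left_inv ?right_inv ?summand_eq
  case summand_eq =>
    simp only [mem_sigma, mem_powerset, mem_univ, Sigma.forall]
    rintro s t u h
    congr 1 <;> grind [mem_compl]
  all_goals
    simp only [mem_sigma, mem_powerset, mem_univ, Sigma.forall, Sigma.mk.injEq, heq_eq_eq]
    grind [mem_compl]

end FinsetSums

namespace DForm

variable {n : ℕ}

section ShuffleSign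

variable {A B : Finset (Fin n)}

lemma shuffleSign_eq_prod (A B : Finset (Fin n)) :
    shuffleSign A B = ∏ b ∈ B, ∏ a ∈ A, if b < a then -1 else 1 := by
  simp only [shuffleSign, ← prod_pow_eq_pow_sum, ← prod_filter, prod_const]

lemma shuffleSign_empty_left (B : Finset (Fin n)) : shuffleSign ∅ B = 1 := by
  simp [shuffleSign]

lemma shuffleSign_empty_right (A : Finset (Fin n)) : shuffleSign A ∅ = 1 := by
  simp [shuffleSign]

lemma shuffleSign_mul_self (A B : Finset (Fin n)) : shuffleSign A B * shuffleSign A B = 1 := by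
  rw [shuffleSign, ← mul_pow, neg_one_mul, neg_neg, one_pow]

lemma shuffleSign_union_left (h : Disjoint A B) (C : Finset (Fin n)) :
    shuffleSign (A ∪ B) C = shuffleSign A C * shuffleSign B C := by
  simp only [shuffleSign_eq_prod, prod_union h, prod_mul_distrib]

lemma shuffleSign_union_right (C : Finset (Fin n)) (h : Disjoint A B) :
    shuffleSign C (A ∪ B) = shuffleSign C A * shuffleSign C B := by
  simp only [shuffleSign_eq_prod, prod_union h]

lemma shuffleSign_symmDiff_left (A B C : Finset (Fin n)) :
    shuffleSign (symmDiff A B) C = shuffleSign A C * shuffleSign B C := by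
  simp only [shuffleSign_eq_prod, ← prod_mul_distrib]
  exact prod_congr rfl fun c _ ↦ prod_symmDiff_of_mul_self_eq_one A B fun a ↦ by
    split_ifs <;> norm_num

lemma shuffleSign_symmDiff_right (C A B : Finset (Fin n)) :
    shuffleSign C (symmDiff A B) = shuffleSign C A * shuffleSign C B := by
  simp only [shuffleSign_eq_prod]
  refine prod_symmDiff_of_mul_self_eq_one A B fun b ↦ ?_
  simpa only [shuffleSign_eq_prod, prod_singleton] using shuffleSign_mul_self C {b}

lemma shuffleSign_mul_shuffleSign_swap (h : Disjoint A B) :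
    shuffleSign A B * shuffleSign B A = (-1) ^ (#A * #B) := by
  rw [shuffleSign_eq_prod, shuffleSign_eq_prod, prod_comm, ← prod_mul_distrib]
  simp only [← prod_mul_distrib]
  have inversion (a : Fin n) (ha : a ∈ A) (b : Fin n) (hb : b ∈ B) :
      ((if b < a then -1 else 1) * if a < b then -1 else 1 : ℝ) = -1 := by
    have hne : a ≠ b := fun hab ↦ disjoint_left.mp h ha (hab ▸ hb)
    obtain hab | hab := hne.lt_or_gt <;>
      simp [hab, hab.not_gt]
  rw [prod_congr rfl fun a ha ↦ prod_congr rfl (inversion a ha), prod_const, prod_const,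
    ← pow_mul, mul_comm]

lemma shuffleSign_union_union_mul {C : Finset (Fin n)} (hAB : Disjoint A B) (hBC : Disjoint B C) :
    shuffleSign (A ∪ B) C * shuffleSign A B = shuffleSign A (B ∪ C) * shuffleSign B C := by
  rw [shuffleSign_union_left hAB, shuffleSign_union_right A hBC]
  ring

lemma shuffleSign_union_mul_shuffleSign_union {D E : Finset (Fin n)} (hAB : Disjoint A B)
    (hAD : Disjoint A D) (hAE : Disjoint A E) (hBD : Disjoint B D) (hBE : Disjoint B E)
    (hDE : Disjoint D E) :
    shuffleSign (D ∪ A) (E ∪ B) * shuffleSign (E ∪ A) (D ∪ B) =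
      (-1) ^ (#D * #E + #B * #D + #B * #E) * shuffleSign (A ∪ B) (D ∪ E) := by
  rw [shuffleSign_union_left hAD.symm, shuffleSign_union_left hAE.symm,
    shuffleSign_union_left hAB]
  simp only [shuffleSign_union_right _ hBE.symm, shuffleSign_union_right _ hBD.symm,
    shuffleSign_union_right _ hDE, pow_add, ← shuffleSign_mul_shuffleSign_swap hDE,
    ← shuffleSign_mul_shuffleSign_swap hBD, ← shuffleSign_mul_shuffleSign_swap hBE]
  have hAB_sq := shuffleSign_mul_self A B
  have hBD_sq := shuffleSign_mul_self B D
  have hBE_sq := shuffleSign_mul_self B E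
  linear_combination (shuffleSign D E * shuffleSign E D * shuffleSign D B * shuffleSign E B *
    shuffleSign A D * shuffleSign A E) *
      (hAB_sq - shuffleSign B E * shuffleSign B E * hBD_sq - hBE_sq)

end ShuffleSign

section Algebra

variable {ω α β γ : DForm n} {p q r s : ℕ}

lemma dpow_zero_wedge (ω α : DForm n) : wedge (dpow ω 0) α = α := by
  funext I J
  simp only [wedge, dpow]
  rw [sum_eq_single ∅ (fun A _ hA ↦ by simp [hA]) (by simp),
    sum_eq_single ∅ (fun B _ hB ↦ by simp [hB]) (by simp)]
  simp [shuffleSign_empty_left]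

lemma wedge_assoc (α β γ : DForm n) : wedge (wedge α β) γ = wedge α (wedge β γ) := by
  funext I J
  let F (A A' A'' B B' B'' : Finset (Fin n)) : ℝ :=
    shuffleSign A (A' ∪ A'') * shuffleSign A' A'' *
      (shuffleSign B (B' ∪ B'') * shuffleSign B' B'') * α A B * β A' B' * γ A'' B''
  calc
    _ = ∑ S ∈ I.powerset, ∑ A ∈ S.powerset, ∑ T ∈ J.powerset, ∑ B ∈ T.powerset,
          F A (S \ A) (I \ S) B (T \ B) (J \ T) := by
      simp only [wedge, mul_sum, sum_mul]
      refine sum_congr rfl fun S _ ↦ ?_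
      rw [sum_comm]
      refine sum_congr rfl fun A hA ↦ sum_congr rfl fun T hT ↦ sum_congr rfl fun B hB ↦ ?_
      rw [mem_powerset] at hA hB
      have cocycle (X : Finset (Fin n)) {U V : Finset (Fin n)} (hUV : U ⊆ V) :
          shuffleSign U (V \ U ∪ X \ V) * shuffleSign (V \ U) (X \ V) =
            shuffleSign V (X \ V) * shuffleSign U (V \ U) := by
        rw [← shuffleSign_union_union_mul disjoint_sdiff (disjoint_sdiff.mono_left sdiff_subset),
          union_sdiff_of_subset hUV]
      simp only [F, cocycle I hA, cocycle J hB]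
      ring
    _ = ∑ A ∈ I.powerset, ∑ A' ∈ (I \ A).powerset, ∑ B ∈ J.powerset, ∑ B' ∈ (J \ B).powerset,
          F A A' ((I \ A) \ A') B B' ((J \ B) \ B') := by
      simp_rw [sum_powerset_sum_powerset_sdiff J]
      exact sum_powerset_sum_powerset_sdiff I fun A A' A'' ↦
        ∑ B ∈ J.powerset, ∑ B' ∈ (J \ B).powerset, F A A' A'' B B' ((J \ B) \ B')
    _ = _ := by
      simp only [wedge, mul_sum]
      refine sum_congr rfl fun A _ ↦ ?_
      rw [sum_comm]
      refine sum_congr rfl fun B _ ↦ sum_congr rfl fun A' hA ↦ sum_congr rfl fun B' hB ↦ ?_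
      rw [mem_powerset] at hA hB
      simp only [F, union_sdiff_of_subset hA, union_sdiff_of_subset hB]
      ring

lemma dpow_add (ω : DForm n) (k l : ℕ) : dpow ω (k + l) = wedge (dpow ω k) (dpow ω l) := by
  induction k with
  | zero => rw [zero_add, dpow_zero_wedge]
  | succ k ih => rw [Nat.succ_add, dpow, dpow, ih, wedge_assoc]

lemma IsOfDeg.wedge (hα : IsOfDeg α p q) (hβ : IsOfDeg β r s) :
    IsOfDeg (wedge α β) (p + r) (q + s) := by
  intro I J h
  obtain ⟨A, hA, h⟩ := exists_ne_zero_of_sum_ne_zero h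
  obtain ⟨B, hB, h⟩ := exists_ne_zero_of_sum_ne_zero h
  obtain ⟨hAp, hBq⟩ := hα A B (right_ne_zero_of_mul (left_ne_zero_of_mul h))
  obtain ⟨hAr, hBs⟩ := hβ (I \ A) (J \ B) (right_ne_zero_of_mul h)
  rw [← card_sdiff_add_card_eq_card (mem_powerset.mp hA),
    ← card_sdiff_add_card_eq_card (mem_powerset.mp hB), hAp, hBq, hAr, hBs]
  exact ⟨add_comm r p, add_comm s q⟩

lemma IsOfDeg.dpow (hω : IsOfDeg ω p q) (k : ℕ) : IsOfDeg (dpow ω k) (p * k) (q * k) := by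
  induction k with
  | zero =>
    intro I J h
    obtain ⟨rfl, rfl⟩ : I = ∅ ∧ J = ∅ := by simpa [DForm.dpow] using h
    simp
  | succ k ih =>
    rw [mul_add_one, mul_add_one, add_comm _ p, add_comm _ q]
    exact hω.wedge ih

lemma IsOfDeg.transp (hω : IsOfDeg ω p q) : IsOfDeg (transp ω) q p :=
  fun I J h ↦ (hω J I h).symm

lemma IsSym.transp_eq (hω : IsSym ω) : transp ω = ω :=
  funext₂ fun I J ↦ hω J I

lemma transp_transp (ω : DForm n) : transp (transp ω) = ω := rfl

lemma transp_wedge (α β : DForm n) : transp (wedge α β) = wedge (transp α) (transp β) := by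
  funext I J
  simp only [transp, wedge]
  rw [sum_comm]
  refine sum_congr rfl fun A _ ↦ sum_congr rfl fun B _ ↦ ?_
  rw [mul_comm (shuffleSign B _)]

lemma transp_dpow (ω : DForm n) (k : ℕ) : transp (dpow ω k) = dpow (transp ω) k := by
  induction k with
  | zero =>
    funext I J
    simp only [transp, dpow, and_comm]
  | succ k ih => rw [dpow, dpow, transp_wedge, ih]

end Algebra

section Contraction

variable {θ : DForm n} {k : ℕ}

lemma contr_apply (θ : DForm n) (I J : Finset (Fin n)) :
    contr θ I J =
      ∑ j ∈ (I ∪ J)ᶜ, shuffleSign {j} (symmDiff I J) * θ (insert j I) (insert j J) := by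
  rw [← Fintype.sum_ite_mem]
  simp only [contr, mem_compl, ite_not, mem_union, shuffleSign_symmDiff_right]

lemma citer_apply (θ : DForm n) (k : ℕ) (I J : Finset (Fin n)) :
    citer θ k I J = (k.factorial : ℝ) * ∑ K ∈ powersetCard k (I ∪ J)ᶜ,
      shuffleSign K (symmDiff I J) * θ (K ∪ I) (K ∪ J) := by
  induction k generalizing I J with
  | zero => simp [citer, shuffleSign_empty_left]
  | succ k ih =>
    let f (K : Finset (Fin n)) : ℝ := shuffleSign K (symmDiff I J) * θ (K ∪ I) (K ∪ J)
    have contr_term (j : Fin n) (hj : j ∈ (I ∪ J)ᶜ) :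
        shuffleSign {j} (symmDiff I J) * citer θ k (insert j I) (insert j J) =
          k.factorial * ∑ K ∈ powersetCard k ((I ∪ J)ᶜ.erase j), f (insert j K) := by
      have hcompl : (insert j I ∪ insert j J)ᶜ = (I ∪ J)ᶜ.erase j := by grind [mem_compl]
      have hsymm : symmDiff (insert j I) (insert j J) = symmDiff I J := by
        ext b
        simp only [mem_symmDiff]
        grind [mem_compl]
      rw [ih, hcompl, hsymm, mul_left_comm, mul_sum]
      refine congrArg _ (sum_congr rfl fun K hK ↦ ?_)
      have hjK : Disjoint {j} K :=
        disjoint_singleton_left.mpr fun hj ↦ notMem_erase j _ ((mem_powersetCard.mp hK).1 hj)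
      simp only [f, union_insert, ← insert_union]
      rw [insert_eq j K, shuffleSign_union_left hjK, mul_assoc]
    rw [citer, contr_apply, sum_congr rfl contr_term, ← mul_sum,
      sum_sum_powersetCard_erase_insert, Nat.factorial_succ]
    push_cast [nsmul_eq_mul]
    ring

lemma toScalar_citer_div_factorial (hθ : IsOfDeg θ k k) :
    toScalar (citer θ k) / (k.factorial : ℝ) = ∑ I, θ I I := by
  rw [toScalar, citer_apply, mul_div_cancel_left₀ _ (by positivity)]
  simp only [union_empty, compl_empty, symmDiff_self, bot_eq_empty, shuffleSign_empty_right,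
    one_mul]
  refine sum_subset (subset_univ _) fun I _ hI ↦ ?_
  by_contra h
  exact hI (mem_powersetCard.mpr ⟨subset_univ I, (hθ I I h).1⟩)

end Contraction

section Avez

variable {α β : DForm n} {a b : ℕ}

lemma sum_dinner_citer_eq_sum_sum_powerset (hα : IsOfDeg α a b) (hβ : IsOfDeg β a b) :
    ∑ r ∈ range (a + 1),
        (-1 : ℝ) ^ r / (r.factorial : ℝ) ^ 2 * dinner (citer α r) (citer β r) =
      ∑ I, ∑ J, ∑ K ∈ (I ∪ J)ᶜ.powerset, ∑ L ∈ (I ∪ J)ᶜ.powerset,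
        (-1) ^ #K * (shuffleSign (symmDiff K L) (symmDiff I J) *
          (α (K ∪ I) (K ∪ J) * β (L ∪ I) (L ∪ J))) := by
  let F (I J K L : Finset (Fin n)) : ℝ :=
    (-1) ^ #K * (shuffleSign (symmDiff K L) (symmDiff I J) *
      (α (K ∪ I) (K ∪ J) * β (L ∪ I) (L ∪ J)))
  have card_of_ne_zero (I J : Finset (Fin n)) :
      ∀ K ⊆ (I ∪ J)ᶜ, ∀ L ⊆ (I ∪ J)ᶜ, F I J K L ≠ 0 → #K < a + 1 ∧ #L = #K := by
    intro K hK L hL h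
    have hprod := right_ne_zero_of_mul (right_ne_zero_of_mul h)
    have hcardK := (hα _ _ (left_ne_zero_of_mul hprod)).1
    have hcardL := (hβ _ _ (right_ne_zero_of_mul hprod)).1
    rw [compl_union] at hK hL
    rw [card_union_of_disjoint (disjoint_compl_left.mono_left (hK.trans inter_subset_left))]
      at hcardK
    rw [card_union_of_disjoint (disjoint_compl_left.mono_left (hL.trans inter_subset_left))]
      at hcardL
    omega
  calc
    _ = ∑ r ∈ range (a + 1), ∑ I, ∑ J, ∑ K ∈ powersetCard r (I ∪ J)ᶜ,
          ∑ L ∈ powersetCard r (I ∪ J)ᶜ, F I J K L := by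
      refine sum_congr rfl fun r _ ↦ ?_
      simp only [dinner, citer_apply, mul_mul_mul_comm, sum_mul_sum]
      simp only [mul_sum]
      refine sum_congr rfl fun I _ ↦ sum_congr rfl fun J _ ↦ sum_congr rfl fun K hK ↦
        sum_congr rfl fun L _ ↦ ?_
      simp only [F, (mem_powersetCard.mp hK).2, shuffleSign_symmDiff_left]
      field_simp
    _ = _ := by
      rw [sum_comm]
      refine sum_congr rfl fun I _ ↦ ?_
      rw [sum_comm]
      exact sum_congr rfl fun J _ ↦
        sum_range_sum_powersetCard_sum_powersetCard _ _ (card_of_ne_zero I J)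

lemma sum_dinner_citer_eq_sum_disjoint (hα : IsOfDeg α a b) (hβ : IsOfDeg β a b) :
    ∑ r ∈ range (a + 1),
        (-1 : ℝ) ^ r / (r.factorial : ℝ) ^ 2 * dinner (citer α r) (citer β r) =
      ∑ D, ∑ E ∈ Dᶜ.powerset, ∑ A ∈ (D ∪ E)ᶜ.powerset, ∑ B ∈ ((D ∪ E)ᶜ \ A).powerset,
        (-1) ^ #A * (shuffleSign (A ∪ B) (D ∪ E) *
          (α (D ∪ A) (E ∪ A) * β (D ∪ B) (E ∪ B))) := by
  rw [sum_dinner_citer_eq_sum_sum_powerset hα hβ, sum_sum_eq_sum_sdiff_inter]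
  refine sum_congr rfl fun D _ ↦ sum_congr rfl fun E hE ↦ ?_
  have hDE : symmDiff D E = D ∪ E := by
    rw [mem_powerset] at hE
    exact (disjoint_compl_right.mono_right hE).symmDiff_eq_sup
  calc
    _ = ∑ M ∈ (D ∪ E)ᶜ.powerset, ∑ K ∈ ((D ∪ E)ᶜ \ M).powerset, ∑ L ∈ ((D ∪ E)ᶜ \ M).powerset,
          (-1) ^ #K * (shuffleSign (symmDiff (M ∪ K) (M ∪ L)) (D ∪ E) *
            (α (D ∪ (M ∪ K)) (E ∪ (M ∪ K)) * β (D ∪ (M ∪ L)) (E ∪ (M ∪ L)))) := by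
      refine sum_congr rfl fun M hM ↦ ?_
      rw [mem_powerset] at hM
      have hcompl : (D ∪ M ∪ (E ∪ M))ᶜ = (D ∪ E)ᶜ \ M := by grind [mem_compl]
      have hsymm : symmDiff (D ∪ M) (E ∪ M) = D ∪ E := by
        rw [← hDE]
        ext i
        simp only [mem_symmDiff]
        grind [mem_compl]
      rw [hcompl, hsymm]
      refine sum_congr rfl fun K hK ↦ sum_congr rfl fun L hL ↦ ?_
      rw [mem_powerset, subset_sdiff] at hK hL
      have hKL : symmDiff (M ∪ K) (M ∪ L) = symmDiff K L := by
        ext i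
        simp only [mem_symmDiff]
        grind [disjoint_left]
      have hcomm (X Y : Finset (Fin n)) : X ∪ (Y ∪ M) = Y ∪ (M ∪ X) := by
        rw [union_left_comm, union_comm X M]
      simp only [hKL, hcomm]
    _ = _ := by
      rw [sum_powerset_neg_one_pow_card_mul (D ∪ E)ᶜ fun A B ↦
        shuffleSign (symmDiff A B) (D ∪ E) * (α (D ∪ A) (E ∪ A) * β (D ∪ B) (E ∪ B))]
      refine sum_congr rfl fun A _ ↦ sum_congr rfl fun B hB ↦ ?_
      rw [mem_powerset, subset_sdiff] at hB
      rw [hB.2.symm.symmDiff_eq_sup, sup_eq_union]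

lemma sum_wedge_transp_eq_sum_disjoint (hα : IsOfDeg α a b) (hβ : IsOfDeg β a b) :
    ∑ I, wedge α (transp β) I I =
      (-1) ^ (a * b) *
        ∑ D, ∑ E ∈ Dᶜ.powerset, ∑ A ∈ (D ∪ E)ᶜ.powerset, ∑ B ∈ ((D ∪ E)ᶜ \ A).powerset,
          (-1) ^ #A * (shuffleSign (A ∪ B) (D ∪ E) *
            (α (D ∪ A) (E ∪ A) * β (D ∪ B) (E ∪ B))) := by
  refine (sum_sum_powerset_sum_powerset_eq_sum_disjoint fun T T' U U' ↦
    shuffleSign T T' * shuffleSign U U' * α T U * β U' T').trans ?_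
  simp only [mul_sum]
  refine sum_congr rfl fun D _ ↦ sum_congr rfl fun E hE ↦ sum_congr rfl fun A hA ↦
    sum_congr rfl fun B hB ↦ ?_
  obtain hα0 | hα0 := eq_or_ne (α (D ∪ A) (E ∪ A)) 0
  · simp only [hα0, mul_zero, zero_mul]
  obtain hβ0 | hβ0 := eq_or_ne (β (D ∪ B) (E ∪ B)) 0
  · simp only [hβ0, mul_zero]
  rw [mem_powerset, subset_compl_iff_disjoint_right] at hE
  rw [mem_powerset, subset_compl_iff_disjoint_right, disjoint_union_right] at hA
  rw [mem_powerset, subset_sdiff, subset_compl_iff_disjoint_right, disjoint_union_right] at hB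
  obtain ⟨hAD, hAE⟩ := hA
  obtain ⟨⟨hBD, hBE⟩, hBA⟩ := hB
  obtain ⟨rfl, rfl⟩ := hα _ _ hα0
  have hcard := (hβ _ _ hβ0).1
  rw [card_union_of_disjoint hAD.symm, card_union_of_disjoint hBD.symm, add_right_inj] at hcard
  have hparity : Even (#D * #E + #B * #D + #B * #E) ↔ Even (#(D ∪ A) * #(E ∪ A) + #A) := by
    rw [card_union_of_disjoint hAD.symm, card_union_of_disjoint hAE.symm, hcard]
    grind
  rw [shuffleSign_union_mul_shuffleSign_union hBA.symm hAD hAE hBD hBE hE.symm,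
    neg_one_pow_congr hparity, pow_add]
  ring

theorem toScalar_citer_wedge_transp_div_factorial (hα : IsOfDeg α a b) (hβ : IsOfDeg β a b) :
    toScalar (citer (wedge α (transp β)) (a + b)) / ((a + b).factorial : ℝ) =
      ∑ r ∈ range (a + 1),
        (-1 : ℝ) ^ (r + a * b) / (r.factorial : ℝ) ^ 2 * dinner (citer α r) (citer β r) := by
  have hdeg : IsOfDeg (wedge α (transp β)) (a + b) (a + b) := by
    simpa only [add_comm b a] using hα.wedge hβ.transp
  rw [toScalar_citer_div_factorial hdeg, sum_wedge_transp_eq_sum_disjoint hα hβ,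
    ← sum_dinner_citer_eq_sum_disjoint hα hβ, mul_sum]
  refine sum_congr rfl fun r _ ↦ ?_
  ring

end Avez

end DForm

open DForm in
theorem statement18_general (n p q : ℕ) (ω : DForm n) (hω : IsOfDeg ω p p) :
    toScalar (citer (dpow ω (2 * q)) (2 * p * q)) / ((2 * p * q).factorial : ℝ) =
      ∑ r ∈ range (p * q + 1),
        (-1 : ℝ) ^ (r + p * q) / (r.factorial : ℝ) ^ 2 *
          dinner (citer (dpow ω q) r) (citer (dpow (transp ω) q) r) := by
  have hpow : dpow ω (2 * q) = wedge (dpow ω q) (transp (dpow (transp ω) q)) := by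
    rw [two_mul, dpow_add, transp_dpow, transp_transp]
  have hdeg : 2 * p * q = p * q + p * q := by ring
  have hparity (r : ℕ) : (-1 : ℝ) ^ (r + p * q * (p * q)) = (-1) ^ (r + p * q) :=
    neg_one_pow_congr (by simp only [Nat.even_add, Nat.even_mul, or_self])
  rw [hpow, hdeg, toScalar_citer_wedge_transp_div_factorial (hω.dpow q) (hω.transp.dpow q)]
  simp only [hparity]

open DForm in
/-- General Avez-type expansion:
`c^{2pq}(ω^{2q})/(2pq)! = ∑_{r=0}^{pq} ((-1)^{r+pq}/(r!)²) ⟨c^r(ω^q), c^r(ω^q)⟩`. -/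
theorem statement18 (n p q : ℕ) (hp : 1 ≤ p) (ω : DForm n) (hsym : IsSym ω)
    (hb : FirstBianchi ω p) (hgr : IsOfDeg ω p p) (hq : 1 ≤ q) (hn : 2 * p * q ≤ n) :
    toScalar (citer (dpow ω (2 * q)) (2 * p * q)) / ((2 * p * q).factorial : ℝ) =
      ∑ r ∈ Finset.range (p * q + 1),
        ((-1 : ℝ) ^ (r + p * q) / ((r.factorial : ℝ)) ^ 2) *
          dinner (citer (dpow ω q) r) (citer (dpow ω q) r) := by
  simpa only [hsym.transp_eq] using statement18_general n p q ω hgr
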